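/- Let Ω ⊂ ℝ² be a bounded open set with boundary of class C². Then there exists a constant C > 0, depending only on Ω, such that for every integer k ≥ 2 and every function u continuously differentiable on the closure of Ω, (∫_Ω |u(x)|^k dx)^{1/k} ≤ C·(Γ(k/2 + 1))^{1/k}·(∫_Ω u² dx + ∫_Ω |∇u|² dx)^{1/2}, where Γ denotes the Gamma function. -/

import Mathlib

open MeasureTheory Bornology

/-- `g` is a local `C²` defining function for `Ω` near the boundary point `x`. -/
def IsC2LocalDefining {N : ℕ} (Ω : Set (EuclideanSpace ℝ (Fin N)))
    (x : EuclideanSpace ℝ (Fin N)) (U : Set (EuclideanSpace ℝ (Fin N)))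
    (g : EuclideanSpace ℝ (Fin N) → ℝ) : Prop :=
  IsOpen U ∧ x ∈ U ∧ ContDiffOn ℝ 2 g U ∧ (∀ y ∈ U, gradient g y ≠ 0) ∧
    Ω ∩ U = {y ∈ U | g y < 0}

open scoped ENNReal NNReal Topology

abbrev E2 := EuclideanSpace ℝ (Fin 2)

/-- Truncated open cone. -/
def tcone (ξ : E2) (h : ℝ) : Set E2 := {w | ‖w‖ < h ∧ ‖w‖ / 2 < inner ℝ ξ w}

lemma tcone_open (ξ : E2) (h : ℝ) : IsOpen (tcone ξ h) := by
  have h1 : IsOpen {w : E2 | ‖w‖ < h} := isOpen_lt (by fun_prop) (by fun_prop)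
  have h2 : IsOpen {w : E2 | ‖w‖ / 2 < inner ℝ ξ w} := isOpen_lt (by fun_prop) (by fun_prop)
  exact h1.inter h2

lemma tcone_nonempty {ξ : E2} (hξ : ‖ξ‖ = 1) {h : ℝ} (hh : 0 < h) : (tcone ξ h).Nonempty := by
  refine ⟨(h / 2) • ξ, ?_, ?_⟩
  · rw [norm_smul, hξ, Real.norm_of_nonneg (by positivity)]; linarith
  · rw [norm_smul, hξ, Real.norm_of_nonneg (by positivity), inner_smul_right,
      real_inner_self_eq_norm_sq, hξ]; linarith

lemma tcone_smul {ξ : E2} {h : ℝ} {w : E2} (hw : w ∈ tcone ξ h) {t : ℝ} (h0 : 0 < t)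
    (h1 : t ≤ 1) : t • w ∈ tcone ξ h := by
  obtain ⟨a, b⟩ := hw
  refine ⟨?_, ?_⟩
  · rw [norm_smul, Real.norm_of_nonneg h0.le]; nlinarith [norm_nonneg w]
  · rw [norm_smul, Real.norm_of_nonneg h0.le, inner_smul_right]; nlinarith

lemma tcone_ne_zero {ξ : E2} {h : ℝ} {w : E2} (hw : w ∈ tcone ξ h) : w ≠ 0 := by
  rintro rfl
  obtain ⟨a, b⟩ := hw
  simp at b

lemma cone_local (Ω : Set E2) (hΩ : IsOpen Ω)
    (hbdy : ∀ x ∈ frontier Ω, ∃ U g, IsC2LocalDefining Ω x U g) (x : E2) (hx : x ∈ closure Ω) :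
    ∃ r : ℝ, 0 < r ∧ r ≤ 1 ∧ ∃ ξ : E2, ‖ξ‖ = 1 ∧ ∀ y ∈ Ω ∩ Metric.ball x r, ∀ w ∈ tcone ξ r,
      y + w ∈ Ω := by
  by_cases hxΩ : x ∈ Ω
  · obtain ⟨ε, hε, hb⟩ := Metric.isOpen_iff.1 hΩ x hxΩ
    refine ⟨min (ε / 2) 1, by positivity, min_le_right _ _, EuclideanSpace.single 0 1, by simp, ?_⟩
    rintro y ⟨-, hy⟩ w ⟨hw, -⟩
    apply hb
    rw [Metric.mem_ball, dist_eq_norm] at *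
    have e : y + w - x = (y - x) + w := by abel
    rw [e]
    have := norm_add_le (y - x) w
    have := min_le_left (ε / 2) 1
    linarith
  · obtain ⟨U, g, hU, hxU, hg, hgr, hΩU⟩ := hbdy x ⟨hx, by rwa [hΩ.interior_eq]⟩
    set v := gradient g x with hv
    have hv0 : 0 < ‖v‖ := norm_pos_iff.2 (hgr x hxU)
    have hc : ContinuousOn (fderiv ℝ g) U :=
      hg.continuousOn_fderiv_of_isOpen hU (by norm_num)
    have hcx : ContinuousAt (fderiv ℝ g) x := hc.continuousAt (hU.mem_nhds hxU)
    have hev : ∀ᶠ y in 𝓝 x, y ∈ U ∧ ‖fderiv ℝ g y - fderiv ℝ g x‖ ≤ ‖v‖ / 4 := by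
      refine Filter.Eventually.and (hU.mem_nhds hxU) ?_
      have := Metric.tendsto_nhds.1 hcx (‖v‖ / 4) (by positivity)
      filter_upwards [this] with y hy
      rw [dist_eq_norm] at hy; exact hy.le
    obtain ⟨ε, hε, hb⟩ := Metric.eventually_nhds_iff_ball.1 hev
    refine ⟨min (ε / 2) 1, by positivity, min_le_right _ _, -(‖v‖⁻¹ • v), ?_, ?_⟩
    · rw [norm_neg, norm_smul, norm_inv, norm_norm, inv_mul_cancel₀ hv0.ne']
    rintro y ⟨hyΩ, hy⟩ w ⟨hw, hw2⟩
    have hm := min_le_left (ε / 2) 1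
    have hyb : y ∈ Metric.ball x ε := by
      rw [Metric.mem_ball] at *; linarith
    have hywb : y + w ∈ Metric.ball x ε := by
      rw [Metric.mem_ball, dist_eq_norm] at *
      have e : y + w - x = (y - x) + w := by abel
      rw [e]
      have := norm_add_le (y - x) w
      linarith
    have key := (convex_ball x ε).norm_image_sub_le_of_norm_hasFDerivWithin_le'
      (f := g) (f' := fderiv ℝ g) (φ := fderiv ℝ g x) (C := ‖v‖ / 4)
      (fun z hz => ((hg.differentiableOn (by norm_num)).differentiableAt
        (hU.mem_nhds (hb z hz).1)).hasFDerivAt.hasFDerivWithinAt)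
      (fun z hz => (hb z hz).2) hyb hywb
    have hfd : fderiv ℝ g x w = inner ℝ v w := by
      rw [hv, gradient, InnerProductSpace.toDual_symm_apply]
    rw [add_sub_cancel_left, hfd, Real.norm_eq_abs] at key
    have hk := (abs_le.1 key).2
    have hgy : g y < 0 := by
      have : y ∈ Ω ∩ U := ⟨hyΩ, (hb y hyb).1⟩
      rw [hΩU] at this; exact this.2
    rw [inner_neg_left, real_inner_smul_left] at hw2
    have h3 : inner ℝ v w ≤ - (‖v‖ * (‖w‖ / 2)) := by
      have : ‖v‖ * (‖w‖ / 2) < ‖v‖ * (-(‖v‖⁻¹ * inner ℝ v w)) := by gcongr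
      have e : ‖v‖ * (-(‖v‖⁻¹ * inner ℝ v w)) = - inner ℝ v w := by field_simp
      linarith
    have : y + w ∈ Ω ∩ U := by
      rw [hΩU]
      refine ⟨(hb _ hywb).1, ?_⟩
      have := mul_nonneg hv0.le (norm_nonneg w)
      linarith
    exact this.1

lemma gamma_lower {s : ℝ} (hs : 0 < s) : s ^ s * Real.exp (-s) ≤ Real.Gamma (s + 1) := by
  rw [Real.Gamma_eq_integral (by linarith), ← integral_exp_neg_Ioi s, ← integral_const_mul]
  have hI := Real.GammaIntegral_convergent (s := s + 1) (by linarith)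
  calc ∫ a in Set.Ioi s, s ^ s * Real.exp (-a)
      ≤ ∫ a in Set.Ioi s, Real.exp (-a) * a ^ (s + 1 - 1) := by
        apply setIntegral_mono_on
        · exact (integrableOn_exp_neg_Ioi s).const_mul _
        · exact hI.mono_set (Set.Ioi_subset_Ioi hs.le)
        · exact measurableSet_Ioi
        · intro x hx
          rw [mul_comm, add_sub_cancel_right]
          gcongr
          exact (Set.mem_Ioi.1 hx).le
    _ ≤ _ := by
        apply setIntegral_mono_set hI
        · filter_upwards [ae_restrict_mem measurableSet_Ioi] with x hx
          have := Set.mem_Ioi.1 hx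
          positivity
        · exact (Set.Ioi_subset_Ioi hs.le).eventuallyLE

/-- combining constants -/
lemma const_bound {C : ℝ} (hC : 1 ≤ C) {k : ℕ} (hk : 2 ≤ k) :
    (C * k) ^ ((k : ℝ) / 2 + 1) ≤ (C * (4 * Real.exp 1)) ^ k * Real.Gamma ((k : ℝ) / 2 + 1) := by
  have hk0 : (0 : ℝ) < k := by positivity
  have hk2 : (2 : ℝ) ≤ k := by exact_mod_cast hk
  have h := gamma_lower (s := (k : ℝ) / 2) (by positivity)
  refine le_trans ?_ (mul_le_mul_of_nonneg_left h (by positivity))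
  rw [Real.mul_rpow (by positivity) (by positivity)]
  have h1 : C ^ ((k : ℝ) / 2 + 1) ≤ C ^ k := by
    rw [← Real.rpow_natCast C k]
    exact Real.rpow_le_rpow_of_exponent_le hC (by linarith)
  have h2 : (k : ℝ) ^ ((k : ℝ) / 2 + 1) = k * (2 ^ ((k : ℝ) / 2) * ((k : ℝ) / 2) ^ ((k : ℝ) / 2)) := by
    rw [Real.rpow_add_one hk0.ne', ← Real.mul_rpow (by positivity) (by positivity)]
    rw [mul_div_cancel₀ _ (two_ne_zero), mul_comm]
  have h3 : (k : ℝ) ≤ 2 ^ k := by exact_mod_cast (Nat.lt_two_pow_self (n := k)).le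
  have h4 : (2 : ℝ) ^ ((k : ℝ) / 2) ≤ 2 ^ k := by
    rw [← Real.rpow_natCast 2 k]
    exact Real.rpow_le_rpow_of_exponent_le (by norm_num) (by linarith)
  have h5 : 1 ≤ Real.exp 1 ^ k * Real.exp (-((k : ℝ) / 2)) := by
    rw [← Real.exp_nat_mul, ← Real.exp_add]
    apply Real.one_le_exp
    linarith
  rw [h2]
  calc C ^ ((k : ℝ) / 2 + 1) * (k * (2 ^ ((k : ℝ) / 2) * ((k : ℝ) / 2) ^ ((k : ℝ) / 2)))
      ≤ C ^ k * (2 ^ k * (2 ^ k * ((k : ℝ) / 2) ^ ((k : ℝ) / 2))) := by gcongr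
    _ = C ^ k * (2 ^ k * (2 ^ k * ((k : ℝ) / 2) ^ ((k : ℝ) / 2))) * 1 := by ring
    _ ≤ C ^ k * (2 ^ k * (2 ^ k * ((k : ℝ) / 2) ^ ((k : ℝ) / 2))) *
        (Real.exp 1 ^ k * Real.exp (-((k : ℝ) / 2))) := by gcongr
    _ = _ := by
      have : (4 : ℝ) = 2 * 2 := by norm_num
      rw [this, mul_pow, mul_pow, mul_pow]; ring

/-- The kernel. -/
noncomputable def kern (ξ : E2) (h : ℝ) (z : E2) : ℝ≥0∞ :=
  (tcone ξ h).indicator (fun z => ENNReal.ofReal ‖z‖⁻¹) z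

lemma kern_meas (ξ : E2) (h : ℝ) : Measurable (kern ξ h) := by
  unfold kern
  exact (by fun_prop : Measurable fun z : E2 => ENNReal.ofReal ‖z‖⁻¹).indicator
    (tcone_open ξ h).measurableSet

lemma kern_int : ∃ C : ℝ, 1 ≤ C ∧ ∀ ξ : E2, ∀ h ≤ 1, ∀ k : ℕ, 2 ≤ k →
    ∫⁻ z, kern ξ h z ^ (2 * (k : ℝ) / (k + 2)) ≤ ENNReal.ofReal (C * k) := by
  set B := (volume : Measure E2).real (Metric.ball 0 1) with hB
  refine ⟨2 * B + 1, by have : 0 ≤ B := measureReal_nonneg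
                        linarith, ?_⟩
  intro ξ h hh k hk
  have hk2 : (2 : ℝ) ≤ k := by exact_mod_cast hk
  set r := 2 * (k : ℝ) / (k + 2) with hr
  have hr0 : 0 < r := by positivity
  have hr2 : 2 - r = 4 / (k + 2) := by rw [hr]; field_simp; ring
  have hr2p : 0 < 2 - r := by rw [hr2]; positivity
  let F : ℝ → ℝ := (Set.Iio 1).indicator (fun s => s⁻¹ ^ r)
  have hF0 : ∀ s, 0 ≤ s → 0 ≤ F s := by
    intro s hs
    apply Set.indicator_apply_nonneg
    intro _; positivity
  have hint0 : IntegrableOn (fun s : ℝ => s ^ (1 - r)) (Set.Ioo 0 1) := by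
    have := intervalIntegral.intervalIntegrable_rpow' (a := 0) (b := 1) (r := 1 - r) (by linarith)
    rw [intervalIntegrable_iff_integrableOn_Ioo_of_le zero_le_one] at this
    exact this
  have hfun : ∀ s ∈ Set.Ioi (0 : ℝ), s ^ (Module.finrank ℝ E2 - 1) • F s =
      (Set.Ioo 0 1).indicator (fun s : ℝ => s ^ (1 - r)) s := by
    intro s hs
    have hs0 : 0 < s := hs
    simp only [finrank_euclideanSpace, Fintype.card_fin, F]
    by_cases h1 : s < 1
    · rw [Set.indicator_of_mem (by exact h1), Set.indicator_of_mem (by exact ⟨hs0, h1⟩)]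
      rw [Real.rpow_sub hs0, Real.inv_rpow hs0.le]; simp [div_eq_mul_inv]
    · rw [Set.indicator_of_notMem (by exact h1), Set.indicator_of_notMem (fun h => h1 h.2)]; simp
  have hint : Integrable (fun z : E2 => F ‖z‖) := by
    rw [integrable_fun_norm_addHaar]
    rw [integrableOn_congr_fun hfun measurableSet_Ioi]
    exact ((integrable_indicator_iff measurableSet_Ioo).2 hint0).integrableOn
  have hval : ∫ z : E2, F ‖z‖ = 2 * B * (1 / (2 - r)) := by
    rw [integral_fun_norm_addHaar, setIntegral_congr_fun measurableSet_Ioi hfun,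
      setIntegral_indicator measurableSet_Ioo]
    have : Set.Ioi (0 : ℝ) ∩ Set.Ioo 0 1 = Set.Ioo 0 1 := by
      ext; simp +contextual
    rw [this, ← integral_Ioc_eq_integral_Ioo, ← intervalIntegral.integral_of_le zero_le_one,
      integral_rpow (by left; linarith)]
    have e : 1 - r + 1 = 2 - r := by ring
    rw [e, Real.zero_rpow hr2p.ne']
    simp [hB]; ring
  calc ∫⁻ z, kern ξ h z ^ r ≤ ∫⁻ z : E2, ENNReal.ofReal (F ‖z‖) := by
        apply lintegral_mono
        intro z
        unfold kern
        by_cases hz : z ∈ tcone ξ h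
        · have hz1 : ‖z‖ < 1 := lt_of_lt_of_le hz.1 hh
          simp only [Set.indicator_of_mem hz, F]
          rw [Set.indicator_of_mem (by exact hz1), ENNReal.ofReal_rpow_of_nonneg (by positivity) hr0.le]
        · simp [Set.indicator_of_notMem hz, hr0]
    _ = ENNReal.ofReal (∫ z : E2, F ‖z‖) := by
        rw [ofReal_integral_eq_lintegral_ofReal hint]
        exact Filter.Eventually.of_forall fun z => hF0 _ (norm_nonneg z)
    _ ≤ _ := by
        apply ENNReal.ofReal_le_ofReal
        rw [hval, hr2]
        have hB0 : 0 ≤ B := measureReal_nonneg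
        have : 1 / (4 / ((k : ℝ) + 2)) ≤ k := by field_simp; linarith
        calc 2 * B * (1 / (4 / ((k : ℝ) + 2))) ≤ 2 * B * k := by gcongr
          _ ≤ _ := by nlinarith

lemma young_pt {f G : E2 → ℝ≥0∞} (hf : Measurable f) (hG : Measurable G) {k : ℕ} (hk : 2 ≤ k)
    (y : E2) :
    (∫⁻ z, f (y + z) * G z) ^ k ≤
      (∫⁻ z, f (y + z) ^ 2 * G z ^ (2 * (k : ℝ) / (k + 2))) *
      ((∫⁻ z, G z ^ (2 * (k : ℝ) / (k + 2))) ^ ((k : ℝ) / 2) *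
       (∫⁻ z, f z ^ 2) ^ ((k : ℝ) / 2 - 1)) := by
  have hk2 : (2 : ℝ) ≤ k := by exact_mod_cast hk
  have hk0 : (0 : ℝ) < k := by positivity
  set r := 2 * (k : ℝ) / (k + 2) with hr
  have hr0 : 0 < r := by positivity
  have h1k : 0 ≤ 1 / 2 - 1 / (k : ℝ) := by
    have : 1 / (k : ℝ) ≤ 1 / 2 := one_div_le_one_div_of_le (by norm_num) hk2
    linarith
  have H := ENNReal.lintegral_prod_norm_pow_le (μ := (volume : Measure E2)) (Finset.univ : Finset (Fin 3))
    (f := ![fun z => f (y + z) ^ 2 * G z ^ r, fun z => G z ^ r, fun z => f (y + z) ^ 2])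
    (p := ![1 / (k : ℝ), 1 / 2, 1 / 2 - 1 / k])
    (by
      intro i _
      fin_cases i
      · exact Measurable.aemeasurable (by simp; fun_prop)
      · exact Measurable.aemeasurable (by simp; fun_prop)
      · exact Measurable.aemeasurable (by simp; fun_prop))
    (by simp [Fin.sum_univ_three]; ring)
    (by
      intro i _
      fin_cases i
      · simp
      · simp
      · simpa using h1k)
  simp only [Fin.prod_univ_three, Matrix.cons_val_zero, Matrix.cons_val_one, Matrix.cons_val] at H
  have e : ∀ z, (f (y + z) ^ 2 * G z ^ r) ^ (1 / (k : ℝ)) * (G z ^ r) ^ ((1 : ℝ) / 2) *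
      (f (y + z) ^ 2) ^ (1 / 2 - 1 / (k : ℝ)) = f (y + z) * G z := by
    intro z
    rw [ENNReal.mul_rpow_of_nonneg _ _ (by positivity), ← ENNReal.rpow_natCast, ← ENNReal.rpow_mul,
      ← ENNReal.rpow_mul, ← ENNReal.rpow_mul, ← ENNReal.rpow_mul]
    have e1 : f (y + z) ^ (((2 : ℕ) : ℝ) * (1 / k)) * f (y + z) ^ (((2 : ℕ) : ℝ) * (1 / 2 - 1 / k))
        = f (y + z) := by
      rw [← ENNReal.rpow_add_of_nonneg _ _ (by positivity) (mul_nonneg (by positivity) h1k)]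
      have : ((2 : ℕ) : ℝ) * (1 / k) + ((2 : ℕ) : ℝ) * (1 / 2 - 1 / k) = 1 := by push_cast; ring
      rw [this, ENNReal.rpow_one]
    have e2 : G z ^ (r * (1 / k)) * G z ^ (r * (1 / 2)) = G z := by
      rw [← ENNReal.rpow_add_of_nonneg _ _ (by positivity) (by positivity)]
      have : r * (1 / k) + r * (1 / 2) = 1 := by rw [hr]; field_simp; ring
      rw [this, ENNReal.rpow_one]
    calc _ = (f (y + z) ^ (((2 : ℕ) : ℝ) * (1 / k)) * f (y + z) ^ (((2 : ℕ) : ℝ) * (1 / 2 - 1 / k)))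
          * (G z ^ (r * (1 / k)) * G z ^ (r * (1 / 2))) := by ring
      _ = _ := by rw [e1, e2]
  simp only [e] at H
  have ht : ∫⁻ z, f (y + z) ^ 2 = ∫⁻ z, f z ^ 2 := lintegral_add_left_eq_self (fun z => f z ^ 2) y
  rw [ht] at H
  refine (pow_le_pow_left' H k).trans (le_of_eq ?_)
  rw [mul_pow, mul_pow, ← ENNReal.rpow_natCast, ← ENNReal.rpow_natCast, ← ENNReal.rpow_natCast,
    ← ENNReal.rpow_mul, ← ENNReal.rpow_mul, ← ENNReal.rpow_mul]
  have e1 : 1 / (k : ℝ) * k = 1 := by field_simp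
  have e2 : 1 / (2 : ℝ) * k = k / 2 := by ring
  have e3 : (1 / (2 : ℝ) - 1 / k) * k = k / 2 - 1 := by field_simp
  rw [e1, e2, e3, ENNReal.rpow_one, mul_assoc]

lemma young {f G : E2 → ℝ≥0∞} (hf : Measurable f) (hG : Measurable G) {k : ℕ} (hk : 2 ≤ k) :
    ∫⁻ y, (∫⁻ z, f (y + z) * G z) ^ k ≤
      (∫⁻ z, G z ^ (2 * (k : ℝ) / (k + 2))) ^ ((k : ℝ) / 2 + 1) *
       (∫⁻ z, f z ^ 2) ^ ((k : ℝ) / 2) := by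
  have hk2 : (2 : ℝ) ≤ k := by exact_mod_cast hk
  have hk0 : (0 : ℝ) < k := by positivity
  set r := 2 * (k : ℝ) / (k + 2) with hr
  set J := ∫⁻ z, G z ^ r with hJ
  set N := ∫⁻ z, f z ^ 2 with hN
  have hm : Measurable fun p : E2 × E2 => f (p.1 + p.2) ^ 2 * G p.2 ^ r := by fun_prop
  calc ∫⁻ y, (∫⁻ z, f (y + z) * G z) ^ k
      ≤ ∫⁻ y, (∫⁻ z, f (y + z) ^ 2 * G z ^ r) * (J ^ ((k : ℝ) / 2) * N ^ ((k : ℝ) / 2 - 1)) :=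
        lintegral_mono fun y => young_pt hf hG hk y
    _ = (∫⁻ y, ∫⁻ z, f (y + z) ^ 2 * G z ^ r) * (J ^ ((k : ℝ) / 2) * N ^ ((k : ℝ) / 2 - 1)) := by
        rw [lintegral_mul_const]
        exact hm.lintegral_prod_right'
    _ = (J * N) * (J ^ ((k : ℝ) / 2) * N ^ ((k : ℝ) / 2 - 1)) := by
        congr 1
        rw [lintegral_lintegral_swap hm.aemeasurable]
        have : ∀ z, ∫⁻ y, f (y + z) ^ 2 * G z ^ r = N * G z ^ r := by
          intro z
          rw [lintegral_mul_const _ (by fun_prop)]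
          congr 1
          exact lintegral_add_right_eq_self (fun z => f z ^ 2) z
        simp only [this]
        rw [lintegral_const_mul _ (by fun_prop), mul_comm]
    _ = _ := by
        have e1 : J ^ ((k : ℝ) / 2 + 1) = J ^ ((k : ℝ) / 2) * J := by
          rw [ENNReal.rpow_add_of_nonneg _ _ (by positivity) zero_le_one, ENNReal.rpow_one]
        have e2 : N ^ ((k : ℝ) / 2) = N * N ^ ((k : ℝ) / 2 - 1) := by
          conv_rhs => lhs; rw [← ENNReal.rpow_one N]
          rw [← ENNReal.rpow_add_of_nonneg _ _ zero_le_one (by linarith)]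
          congr 1; ring
        rw [e1, e2]; ring

lemma inv_cube_int {a : ℝ} (ha : 0 < a) :
    ∫⁻ t in Set.Ioi a, ENNReal.ofReal (t⁻¹ ^ 3) ≤ ENNReal.ofReal (a⁻¹ ^ 2) := by
  have e : ∀ t ∈ Set.Ioi a, t⁻¹ ^ 3 = t ^ (-3 : ℝ) := by
    intro t ht
    have : 0 < t := ha.trans ht
    rw [Real.rpow_neg this.le, inv_pow]; norm_cast
  have hi : IntegrableOn (fun t : ℝ => t⁻¹ ^ 3) (Set.Ioi a) := by
    rw [integrableOn_congr_fun e measurableSet_Ioi]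
    exact integrableOn_Ioi_rpow_of_lt (by norm_num) ha
  rw [← ofReal_integral_eq_lintegral_ofReal hi]
  · apply ENNReal.ofReal_le_ofReal
    rw [setIntegral_congr_fun measurableSet_Ioi e, integral_Ioi_rpow_of_lt (by norm_num) ha]
    have : a ^ (-3 + 1 : ℝ) = a⁻¹ ^ 2 := by
      have : (-3 + 1 : ℝ) = -2 := by norm_num
      rw [this, Real.rpow_neg ha.le, inv_pow]; norm_cast
    rw [this]
    have : 0 ≤ a⁻¹ ^ 2 := by positivity
    have e3 : (-3 + 1 : ℝ) = -2 := by norm_num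
    rw [e3]
    linarith
  · filter_upwards [ae_restrict_mem measurableSet_Ioi] with t ht
    have : 0 < t := ha.trans ht
    simp only [Pi.zero_apply]
    positivity

/-- The polar-type computation: averaging line integrals over the cone. -/
lemma cone_avg {f : E2 → ℝ≥0∞} (hf : Measurable f) (ξ : E2) {h : ℝ} (hh : 0 < h) (y : E2) :
    ∫⁻ w in tcone ξ h, ∫⁻ t in Set.Ioc (0 : ℝ) 1, ENNReal.ofReal ‖w‖ * f (y + t • w) ≤
      ENNReal.ofReal (h ^ 2) * ∫⁻ z, f (y + z) * kern ξ h z := by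
  have hK := (tcone_open ξ h).measurableSet
  have hm0 : Measurable fun p : E2 × ℝ => ENNReal.ofReal ‖p.1‖ * f (y + p.2 • p.1) := by fun_prop
  rw [lintegral_lintegral_swap hm0.aemeasurable]
  -- change of variables for fixed t
  have hcv : ∀ t ∈ Set.Ioc (0 : ℝ) 1, ∫⁻ w in tcone ξ h, ENNReal.ofReal ‖w‖ * f (y + t • w) ≤
      ∫⁻ z in tcone ξ h, (Set.Ioi (‖z‖ / h)).indicator (fun t => ENNReal.ofReal (t⁻¹ ^ 3)) t *
        (ENNReal.ofReal ‖z‖ * f (y + z)) := by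
    intro t ht
    have ht0 : 0 < t := ht.1
    let F : E2 → ℝ≥0∞ := fun z => (tcone ξ h).indicator
      (fun w => ENNReal.ofReal ‖w‖) (t⁻¹ • z) * f (y + z)
    have hFm : Measurable F := by
      apply Measurable.mul
      · exact ((by fun_prop : Measurable fun w : E2 => ENNReal.ofReal ‖w‖).indicator hK).comp
          (measurable_const_smul _)
      · fun_prop
    have e1 : ∫⁻ w in tcone ξ h, ENNReal.ofReal ‖w‖ * f (y + t • w) = ∫⁻ w, F (t • w) := by
      rw [← lintegral_indicator hK]
      apply lintegral_congr
      intro w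
      simp only [F, smul_smul, inv_mul_cancel₀ ht0.ne', one_smul]
      by_cases hw : w ∈ tcone ξ h
      · simp [hw]
      · simp [hw]
    have e2 : ∫⁻ w, F (t • w) = ENNReal.ofReal (t⁻¹ ^ 2) * ∫⁻ z, F z := by
      have := Measure.map_addHaar_smul (volume : Measure E2) ht0.ne'
      rw [← lintegral_map hFm (measurable_const_smul t), this, lintegral_smul_measure]
      simp [abs_of_pos ht0]
    rw [e1, e2, ← lintegral_const_mul _ hFm, ← lintegral_indicator hK]
    apply lintegral_mono
    intro z
    simp only [F]
    by_cases hz : t⁻¹ • z ∈ tcone ξ h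
    · have hz2 : z ∈ tcone ξ h := by
        have := tcone_smul hz ht0 ht.2
        rwa [smul_smul, mul_inv_cancel₀ ht0.ne', one_smul] at this
      have hz3 : ‖z‖ / h < t := by
        have := hz.1
        rw [norm_smul, norm_inv, Real.norm_of_nonneg ht0.le] at this
        rw [div_lt_iff₀ hh]
        rwa [inv_mul_lt_iff₀ ht0] at this
      rw [Set.indicator_of_mem hz, Set.indicator_of_mem hz2, Set.indicator_of_mem (by exact hz3)]
      rw [norm_smul, norm_inv, Real.norm_of_nonneg ht0.le, ENNReal.ofReal_mul (by positivity),
        ← mul_assoc, ← mul_assoc, ← mul_assoc, ← ENNReal.ofReal_mul (by positivity)]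
      rfl
    · rw [Set.indicator_of_notMem hz]; simp
  refine (setLIntegral_mono' measurableSet_Ioc hcv).trans ?_
  have hset : MeasurableSet {p : ℝ × E2 | ‖p.2‖ / h < p.1} :=
    measurableSet_lt (by fun_prop) (by fun_prop)
  have hm1 : Measurable fun p : ℝ × E2 => (Set.Ioi (‖p.2‖ / h)).indicator
      (fun t => ENNReal.ofReal (t⁻¹ ^ 3)) p.1 * (ENNReal.ofReal ‖p.2‖ * f (y + p.2)) := by
    apply Measurable.mul
    · exact (by fun_prop : Measurable fun p : ℝ × E2 => ENNReal.ofReal (p.1⁻¹ ^ 3)).indicator hset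
    · fun_prop
  rw [lintegral_lintegral_swap hm1.aemeasurable, ← lintegral_const_mul _
    (by have := kern_meas ξ h; fun_prop), ← lintegral_indicator hK]
  apply lintegral_mono
  intro z
  by_cases hz : z ∈ tcone ξ h
  · simp only [Set.indicator_of_mem hz, kern]
    have hz0 : 0 < ‖z‖ := norm_pos_iff.2 (tcone_ne_zero hz)
    have hmi : Measurable ((Set.Ioi (‖z‖ / h)).indicator (fun t => ENNReal.ofReal (t⁻¹ ^ 3))) :=
      (by fun_prop : Measurable fun t : ℝ => ENNReal.ofReal (t⁻¹ ^ 3)).indicator measurableSet_Ioi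
    rw [lintegral_mul_const _ hmi]
    have : ∫⁻ t in Set.Ioc (0 : ℝ) 1, (Set.Ioi (‖z‖ / h)).indicator
        (fun t => ENNReal.ofReal (t⁻¹ ^ 3)) t ≤ ENNReal.ofReal ((‖z‖ / h)⁻¹ ^ 2) := by
      refine le_trans ?_ (inv_cube_int (by positivity))
      rw [← lintegral_indicator measurableSet_Ioi]
      exact setLIntegral_le_lintegral _ _
    refine (mul_le_mul_left this _).trans (le_of_eq ?_)
    have e : (‖z‖ / h)⁻¹ ^ 2 * ‖z‖ = h ^ 2 * ‖z‖⁻¹ := by field_simp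
    rw [← mul_assoc, ← ENNReal.ofReal_mul (by positivity), e, ENNReal.ofReal_mul (by positivity)]
    ring
  · simp [Set.indicator_of_notMem hz]

/-- The function to which the potential estimate is applied. -/
noncomputable def pot (Ω : Set E2) (u : E2 → ℝ) : E2 → ℝ≥0∞ :=
  Ω.indicator (fun x => ‖u x‖ₑ + ‖fderiv ℝ u x‖ₑ)

lemma pot_meas {Ω : Set E2} (hΩ : IsOpen Ω) {u : E2 → ℝ} (hu : ContDiffOn ℝ 1 u Ω) :
    Measurable (pot Ω u) := by
  have hc : ContinuousOn (fun x => ‖u x‖ₑ + ‖fderiv ℝ u x‖ₑ) Ω :=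
    hu.continuousOn.enorm.add (hu.continuousOn_fderiv_of_isOpen hΩ le_rfl).enorm
  classical
  have := hc.measurable_piecewise (g := fun _ => (0 : ℝ≥0∞)) continuousOn_const hΩ.measurableSet
  have e : Ω.piecewise (fun x => ‖u x‖ₑ + ‖fderiv ℝ u x‖ₑ) (fun _ => (0 : ℝ≥0∞)) = pot Ω u :=
    Set.piecewise_eq_indicator
  rwa [e] at this

lemma pt_line {Ω : Set E2} (hΩ : IsOpen Ω) {u : E2 → ℝ} (hu : ContDiffOn ℝ 1 u Ω) {ξ : E2}
    {h : ℝ} {y : E2} (hy : y ∈ Ω) (hc : ∀ w ∈ tcone ξ h, y + w ∈ Ω) {w : E2}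
    (hw : w ∈ tcone ξ h) :
    ‖u y‖ₑ ≤ pot Ω u (y + w) +
      ∫⁻ t in Set.Ioc (0 : ℝ) 1, ENNReal.ofReal ‖w‖ * pot Ω u (y + t • w) := by
  have hseg : ∀ t ∈ Set.Icc (0 : ℝ) 1, y + t • w ∈ Ω := by
    intro t ht
    rcases ht.1.eq_or_lt with h0 | h0
    · rw [← h0]; simpa using hy
    · exact hc _ (tcone_smul hw h0 ht.2)
  have hd : ∀ t ∈ Set.uIcc (0 : ℝ) 1, HasDerivAt (fun t : ℝ => u (y + t • w))
      (fderiv ℝ u (y + t • w) w) t := by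
    intro t ht
    rw [Set.uIcc_of_le zero_le_one] at ht
    have h1 : HasFDerivAt u (fderiv ℝ u (y + t • w)) (y + t • w) :=
      ((hu.differentiableOn one_ne_zero).differentiableAt (hΩ.mem_nhds (hseg t ht))).hasFDerivAt
    have h2 : HasDerivAt (fun t : ℝ => y + t • w) w t := by
      simpa using ((hasDerivAt_id t).smul_const w).const_add y
    exact h1.comp_hasDerivAt t h2
  have hcd : ContinuousOn (fun t : ℝ => fderiv ℝ u (y + t • w) w) (Set.uIcc (0 : ℝ) 1) := by
    rw [Set.uIcc_of_le zero_le_one]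
    have := (hu.continuousOn_fderiv_of_isOpen hΩ le_rfl).comp
      (by fun_prop : ContinuousOn (fun t : ℝ => y + t • w) (Set.Icc 0 1)) hseg
    exact this.clm_apply continuousOn_const
  have ftc := intervalIntegral.integral_eq_sub_of_hasDerivAt hd hcd.intervalIntegrable
  rw [intervalIntegral.integral_of_le zero_le_one] at ftc
  have e : u y = u (y + w) - ∫ t in Set.Ioc (0 : ℝ) 1, fderiv ℝ u (y + t • w) w := by
    rw [ftc]; simp
  rw [e]
  refine enorm_sub_le.trans (add_le_add ?_ ?_)
  · rw [pot, Set.indicator_of_mem (hc w hw)]; exact le_self_add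
  · refine (enorm_integral_le_lintegral_enorm _).trans ?_
    refine setLIntegral_mono' measurableSet_Ioc fun t ht => ?_
    rw [pot, Set.indicator_of_mem (hseg t ⟨ht.1.le, ht.2⟩), mul_comm, ofReal_norm]
    refine (ContinuousLinearMap.le_opENorm _ _).trans ?_
    gcongr
    exact le_add_self

lemma pt_pot {Ω : Set E2} (hΩ : IsOpen Ω) {u : E2 → ℝ} (hu : ContDiffOn ℝ 1 u Ω) {ξ : E2}
    {h : ℝ} (hh : 0 < h) (hh1 : h ≤ 1) {y : E2} (hy : y ∈ Ω) (hc : ∀ w ∈ tcone ξ h, y + w ∈ Ω) :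
    volume (tcone ξ h) * ‖u y‖ₑ ≤ 2 * ∫⁻ z, pot Ω u (y + z) * kern ξ h z := by
  have hK := (tcone_open ξ h).measurableSet
  have hp := pot_meas hΩ hu
  calc volume (tcone ξ h) * ‖u y‖ₑ = ∫⁻ w in tcone ξ h, ‖u y‖ₑ := by
        rw [setLIntegral_const, mul_comm]
    _ ≤ ∫⁻ w in tcone ξ h, (pot Ω u (y + w) +
          ∫⁻ t in Set.Ioc (0 : ℝ) 1, ENNReal.ofReal ‖w‖ * pot Ω u (y + t • w)) :=
        setLIntegral_mono' hK fun w hw => pt_line hΩ hu hy hc hw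
    _ = (∫⁻ w in tcone ξ h, pot Ω u (y + w)) + ∫⁻ w in tcone ξ h,
          ∫⁻ t in Set.Ioc (0 : ℝ) 1, ENNReal.ofReal ‖w‖ * pot Ω u (y + t • w) :=
        lintegral_add_left (by fun_prop) _
    _ ≤ (∫⁻ z, pot Ω u (y + z) * kern ξ h z) +
          ENNReal.ofReal (h ^ 2) * ∫⁻ z, pot Ω u (y + z) * kern ξ h z := by
        refine add_le_add ?_ (cone_avg hp ξ hh y)
        rw [← lintegral_indicator hK]
        refine lintegral_mono fun w => ?_
        by_cases hw : w ∈ tcone ξ h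
        · simp only [kern, Set.indicator_of_mem hw]
          refine le_mul_of_one_le_right' ?_
          rw [ENNReal.one_le_ofReal]
          exact (one_le_inv₀ (norm_pos_iff.2 (tcone_ne_zero hw))).2 (hw.1.le.trans hh1)
        · simp [Set.indicator_of_notMem hw]
    _ ≤ _ := by
        rw [two_mul]
        gcongr
        refine mul_le_of_le_one_left' ?_
        rw [ENNReal.ofReal_le_one]
        exact pow_le_one₀ hh.le hh1

lemma pot_sq {Ω : Set E2} (hΩ : IsOpen Ω) (u : E2 → ℝ) :
    ∫⁻ z, pot Ω u z ^ 2 ≤ 2 * ∫⁻ z in Ω, (‖u z‖ₑ ^ 2 + ‖fderiv ℝ u z‖ₑ ^ 2) := by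
  rw [← lintegral_const_mul' _ _ (by simp), ← lintegral_indicator hΩ.measurableSet]
  refine lintegral_mono fun z => ?_
  by_cases hz : z ∈ Ω
  · simp only [pot, Set.indicator_of_mem hz]
    simp only [enorm_eq_nnnorm]
    exact_mod_cast add_sq_le (a := ‖u z‖₊) (b := ‖fderiv ℝ u z‖₊)
  · simp [pot, Set.indicator_of_notMem hz]

lemma local_bound {Ω : Set E2} (hΩ : IsOpen Ω) {A : Set E2} (hA : MeasurableSet A) {ξ : E2}
    (hξ : ‖ξ‖ = 1) {h : ℝ} (hh : 0 < h) (hh1 : h ≤ 1)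
    (hc : ∀ y ∈ Ω ∩ A, ∀ w ∈ tcone ξ h, y + w ∈ Ω) :
    ∃ D : ℝ, 0 < D ∧ ∀ k : ℕ, 2 ≤ k → ∀ u : E2 → ℝ, ContDiffOn ℝ 1 u Ω →
      ∫⁻ x in Ω ∩ A, ‖u x‖ₑ ^ k ≤ ENNReal.ofReal (D ^ k * Real.Gamma ((k : ℝ) / 2 + 1)) *
        (∫⁻ z in Ω, (‖u z‖ₑ ^ 2 + ‖fderiv ℝ u z‖ₑ ^ 2)) ^ ((k : ℝ) / 2) := by
  obtain ⟨C, hC, hJ⟩ := kern_int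
  have hK0 : volume (tcone ξ h) ≠ 0 := ((tcone_open ξ h).measure_pos _ (tcone_nonempty hξ hh)).ne'
  have hKt : volume (tcone ξ h) ≠ ⊤ := by
    refine ne_top_of_le_ne_top (measure_ball_lt_top (x := (0 : E2)) (r := h)).ne
      (measure_mono fun w hw => ?_)
    simpa using hw.1
  set m := (volume (tcone ξ h)).toReal with hm
  have hm0 : 0 < m := ENNReal.toReal_pos hK0 hKt
  have hmv : volume (tcone ξ h) = ENNReal.ofReal m := (ENNReal.ofReal_toReal hKt).symm
  refine ⟨m⁻¹ * 4 * (C * (4 * Real.exp 1)), by positivity, ?_⟩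
  intro k hk u hu
  have hk2 : (2 : ℝ) ≤ k := by exact_mod_cast hk
  set N := ∫⁻ z in Ω, (‖u z‖ₑ ^ 2 + ‖fderiv ℝ u z‖ₑ ^ 2) with hN
  have hp := pot_meas hΩ hu
  have hG : 0 < Real.Gamma ((k : ℝ) / 2 + 1) := Real.Gamma_pos_of_pos (by positivity)
  have hpt : ∀ y ∈ Ω ∩ A, ‖u y‖ₑ ^ k ≤
      ENNReal.ofReal ((m⁻¹ * 2) ^ k) * (∫⁻ z, pot Ω u (y + z) * kern ξ h z) ^ k := by
    intro y hy
    rw [ENNReal.ofReal_pow (by positivity), ← mul_pow]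
    gcongr
    have h1 := pt_pot hΩ hu hh hh1 hy.1 (hc y hy)
    rw [hmv] at h1
    calc ‖u y‖ₑ = ENNReal.ofReal m⁻¹ * (ENNReal.ofReal m * ‖u y‖ₑ) := by
          rw [← mul_assoc, ← ENNReal.ofReal_mul (by positivity), inv_mul_cancel₀ hm0.ne']; simp
      _ ≤ ENNReal.ofReal m⁻¹ * (2 * ∫⁻ z, pot Ω u (y + z) * kern ξ h z) := by gcongr
      _ = _ := by
        rw [ENNReal.ofReal_mul (by positivity), mul_assoc]; simp
  calc ∫⁻ x in Ω ∩ A, ‖u x‖ₑ ^ k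
      ≤ ∫⁻ y in Ω ∩ A, ENNReal.ofReal ((m⁻¹ * 2) ^ k) *
          (∫⁻ z, pot Ω u (y + z) * kern ξ h z) ^ k :=
        setLIntegral_mono' (hΩ.measurableSet.inter hA) hpt
    _ ≤ ∫⁻ y, ENNReal.ofReal ((m⁻¹ * 2) ^ k) * (∫⁻ z, pot Ω u (y + z) * kern ξ h z) ^ k :=
        setLIntegral_le_lintegral _ _
    _ = ENNReal.ofReal ((m⁻¹ * 2) ^ k) * ∫⁻ y, (∫⁻ z, pot Ω u (y + z) * kern ξ h z) ^ k :=
        lintegral_const_mul' _ _ ENNReal.ofReal_ne_top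
    _ ≤ ENNReal.ofReal ((m⁻¹ * 2) ^ k) * (ENNReal.ofReal (C * k) ^ ((k : ℝ) / 2 + 1) *
          (2 * N) ^ ((k : ℝ) / 2)) := by
        gcongr
        refine (young hp (kern_meas ξ h) hk).trans ?_
        gcongr
        · exact hJ ξ h hh1 k hk
        · exact pot_sq hΩ u
    _ ≤ ENNReal.ofReal ((m⁻¹ * 2) ^ k) * (ENNReal.ofReal ((C * (4 * Real.exp 1)) ^ k *
          Real.Gamma ((k : ℝ) / 2 + 1)) * (ENNReal.ofReal (2 ^ k) * N ^ ((k : ℝ) / 2))) := by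
        rw [ENNReal.mul_rpow_of_nonneg _ _ (by positivity)]
        gcongr
        · rw [ENNReal.ofReal_rpow_of_nonneg (by positivity) (by positivity)]
          exact ENNReal.ofReal_le_ofReal (const_bound hC hk)
        · rw [ENNReal.ofReal_pow (by positivity), ← ENNReal.rpow_natCast]
          simp only [ENNReal.ofReal_ofNat]
          exact ENNReal.rpow_le_rpow_of_exponent_le (by norm_num) (by linarith)
    _ = _ := by
        rw [← mul_assoc (ENNReal.ofReal _) (ENNReal.ofReal _) (N ^ _), ← mul_assoc,
          ← ENNReal.ofReal_mul (by positivity), ← ENNReal.ofReal_mul (by positivity)]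
        congr 2
        have : (4 : ℝ) = 2 * 2 := by norm_num
        rw [mul_pow (m⁻¹ * 4), mul_pow m⁻¹ 4, mul_pow m⁻¹ 2]
        have : (4 : ℝ) ^ k = 2 ^ k * 2 ^ k := by rw [← mul_pow]; norm_num
        rw [this]; ring

lemma norm_gradient (u : E2 → ℝ) (x : E2) : ‖gradient u x‖ = ‖fderiv ℝ u x‖ := by
  rw [gradient, LinearIsometryEquiv.norm_map]

lemma bdd_data {Ω : Set E2} (hΩ : IsOpen Ω) (hb : IsBounded Ω) {u : E2 → ℝ}
    (hu : ContDiffOn ℝ 1 u (closure Ω)) :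
    ∃ M : ℝ, ∀ x ∈ Ω, ‖u x‖ ≤ M ∧ ‖fderiv ℝ u x‖ ≤ M := by
  have hcomp : IsCompact (closure Ω) := hb.isCompact_closure
  have key : ∃ M : ℝ, ∀ x ∈ closure Ω, x ∈ Ω → ‖u x‖ ≤ M ∧ ‖fderiv ℝ u x‖ ≤ M := by
    refine hcomp.induction_on (p := fun s => ∃ M : ℝ, ∀ x ∈ s, x ∈ Ω → ‖u x‖ ≤ M ∧
      ‖fderiv ℝ u x‖ ≤ M) ⟨0, by simp⟩ ?_ ?_ ?_
    · rintro s t hst ⟨M, hM⟩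
      exact ⟨M, fun x hx => hM x (hst hx)⟩
    · rintro s t ⟨M, hM⟩ ⟨M', hM'⟩
      refine ⟨max M M', ?_⟩
      rintro x (hx | hx) hxΩ
      · exact ⟨(hM x hx hxΩ).1.trans (le_max_left _ _), (hM x hx hxΩ).2.trans (le_max_left _ _)⟩
      · exact ⟨(hM' x hx hxΩ).1.trans (le_max_right _ _),
          (hM' x hx hxΩ).2.trans (le_max_right _ _)⟩
    · intro x hx
      have h1 : ContDiffWithinAt ℝ (0 + 1) u (closure Ω) x := by simpa using hu x hx
      obtain ⟨V, hV, -, f', hf', hf'c⟩ :=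
        (contDiffWithinAt_succ_iff_hasFDerivWithinAt (by simp)).1 h1
      rw [Set.insert_eq_of_mem hx] at hV
      have hxV : x ∈ V := mem_of_mem_nhdsWithin hx hV
      have hc' : ContinuousWithinAt f' V x := hf'c.continuousWithinAt
      have hcu : ContinuousWithinAt u (closure Ω) x := hu.continuousOn x hx
      have hb1 : ∀ᶠ z in 𝓝[closure Ω] x, ‖f' z‖ ≤ ‖f' x‖ + 1 := by
        have : ∀ᶠ z in 𝓝[V] x, ‖f' z‖ < ‖f' x‖ + 1 :=
          hc'.norm.eventually (gt_mem_nhds (by linarith))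
        have := nhdsWithin_le_of_mem hV this
        filter_upwards [this] with z hz using le_of_lt hz
      have hb2 : ∀ᶠ z in 𝓝[closure Ω] x, ‖u z‖ ≤ ‖u x‖ + 1 := by
        have : ∀ᶠ z in 𝓝[closure Ω] x, ‖u z‖ < ‖u x‖ + 1 :=
          hcu.norm.eventually (gt_mem_nhds (by linarith))
        filter_upwards [this] with z hz using hz.le
      obtain ⟨W, hW, hxW, hWV⟩ := mem_nhdsWithin.1 hV
      refine ⟨{z | ‖f' z‖ ≤ ‖f' x‖ + 1} ∩ {z | ‖u z‖ ≤ ‖u x‖ + 1} ∩ W,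
        Filter.inter_mem (Filter.inter_mem hb1 hb2)
          (mem_nhdsWithin_of_mem_nhds (hW.mem_nhds hxW)),
        max (‖u x‖ + 1) (‖f' x‖ + 1), ?_⟩
      rintro z ⟨⟨hz1, hz2⟩, hzW⟩ hzΩ
      have hVz : V ∈ 𝓝 z := by
        filter_upwards [hW.mem_nhds hzW, hΩ.mem_nhds hzΩ] with a ha ha'
        exact hWV ⟨ha, subset_closure ha'⟩
      have : fderiv ℝ u z = f' z := ((hf' z (mem_of_mem_nhds hVz)).hasFDerivAt hVz).fderiv
      rw [this]
      exact ⟨le_trans hz2 (le_max_left _ _), le_trans hz1 (le_max_right _ _)⟩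
  obtain ⟨M, hM⟩ := key
  exact ⟨M, fun x hx => hM x (subset_closure hx) hx⟩

lemma global_bound {Ω : Set E2} (hΩ : IsOpen Ω) (hb : IsBounded Ω)
    (hbdy : ∀ x ∈ frontier Ω, ∃ U g, IsC2LocalDefining Ω x U g) :
    ∃ D : ℝ, 0 < D ∧ ∀ k : ℕ, 2 ≤ k → ∀ u : E2 → ℝ, ContDiffOn ℝ 1 u Ω →
      ∫⁻ x in Ω, ‖u x‖ₑ ^ k ≤ ENNReal.ofReal (D ^ k * Real.Gamma ((k : ℝ) / 2 + 1)) *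
        (∫⁻ z in Ω, (‖u z‖ₑ ^ 2 + ‖fderiv ℝ u z‖ₑ ^ 2)) ^ ((k : ℝ) / 2) := by
  have hcomp : IsCompact (closure Ω) := hb.isCompact_closure
  have key : ∃ D : ℝ, 0 < D ∧ ∀ k : ℕ, 2 ≤ k → ∀ u : E2 → ℝ, ContDiffOn ℝ 1 u Ω →
      ∫⁻ x in Ω ∩ closure Ω, ‖u x‖ₑ ^ k ≤
        ENNReal.ofReal (D ^ k * Real.Gamma ((k : ℝ) / 2 + 1)) *
        (∫⁻ z in Ω, (‖u z‖ₑ ^ 2 + ‖fderiv ℝ u z‖ₑ ^ 2)) ^ ((k : ℝ) / 2) := by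
    refine hcomp.induction_on (p := fun s => ∃ D : ℝ, 0 < D ∧ ∀ k : ℕ, 2 ≤ k →
      ∀ u : E2 → ℝ, ContDiffOn ℝ 1 u Ω →
      ∫⁻ x in Ω ∩ s, ‖u x‖ₑ ^ k ≤ ENNReal.ofReal (D ^ k * Real.Gamma ((k : ℝ) / 2 + 1)) *
        (∫⁻ z in Ω, (‖u z‖ₑ ^ 2 + ‖fderiv ℝ u z‖ₑ ^ 2)) ^ ((k : ℝ) / 2))
      ⟨1, one_pos, by simp⟩ ?_ ?_ ?_
    · rintro s t hst ⟨D, hD, hM⟩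
      exact ⟨D, hD, fun k hk u hu =>
        (lintegral_mono_set (Set.inter_subset_inter_right _ hst)).trans (hM k hk u hu)⟩
    · rintro s t ⟨D, hD, hM⟩ ⟨D', hD', hM'⟩
      refine ⟨D + D', by positivity, fun k hk u hu => ?_⟩
      have hG : 0 < Real.Gamma ((k : ℝ) / 2 + 1) := Real.Gamma_pos_of_pos (by positivity)
      rw [Set.inter_union_distrib_left]
      refine (lintegral_union_le _ _ _).trans ((add_le_add (hM k hk u hu) (hM' k hk u hu)).trans ?_)
      rw [← add_mul, ← ENNReal.ofReal_add (by positivity) (by positivity), ← add_mul]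
      gcongr
      exact pow_add_pow_le hD.le hD'.le (by omega)
    · intro x hx
      obtain ⟨r, hr, hr1, ξ, hξ, hc⟩ := cone_local Ω hΩ hbdy x hx
      exact ⟨Metric.ball x r, mem_nhdsWithin_of_mem_nhds (Metric.ball_mem_nhds x hr),
        local_bound hΩ measurableSet_ball hξ hr hr1 hc⟩
  rwa [Set.inter_eq_left.2 subset_closure] at key

/-- For a bounded open `Ω ⊆ ℝ²` with `C²` boundary there is a constant
`C > 0` depending only on `Ω` such that for every integer `k ≥ 2` and every `u` of class
`C¹` on `closure Ω`,
`(∫_Ω |u|^k)^{1/k} ≤ C (Γ(k/2 + 1))^{1/k} (∫_Ω u² + ∫_Ω |∇u|²)^{1/2}`. -/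
theorem stmt_19 (Ω : Set (EuclideanSpace ℝ (Fin 2))) (hΩ_open : IsOpen Ω)
    (hΩ_bdd : IsBounded Ω)
    (hΩ_bdy : ∀ x ∈ frontier Ω, ∃ U g, IsC2LocalDefining Ω x U g) :
    ∃ C : ℝ, 0 < C ∧
      ∀ k : ℕ, 2 ≤ k →
        ∀ u : EuclideanSpace ℝ (Fin 2) → ℝ, ContDiffOn ℝ 1 u (closure Ω) →
          (∫ x in Ω, |u x| ^ k) ^ ((1 : ℝ) / k) ≤
            C * Real.Gamma ((k : ℝ) / 2 + 1) ^ ((1 : ℝ) / k) *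
              Real.sqrt ((∫ x in Ω, u x ^ 2) + ∫ x in Ω, ‖gradient u x‖ ^ 2) := by
  obtain ⟨D, hD, H⟩ := global_bound hΩ_open hΩ_bdd hΩ_bdy
  refine ⟨D, hD, fun k hk u hu => ?_⟩
  have hk0 : (0 : ℝ) < k := by positivity
  have hu' : ContDiffOn ℝ 1 u Ω := hu.mono subset_closure
  obtain ⟨M, hM⟩ := bdd_data hΩ_open hΩ_bdd hu
  have hG : 0 < Real.Gamma ((k : ℝ) / 2 + 1) := Real.Gamma_pos_of_pos (by positivity)
  have hmΩ := hΩ_open.measurableSet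
  have hfin : volume Ω < ⊤ := hΩ_bdd.measure_lt_top
  have hcu := hu'.continuousOn
  have hcg : ContinuousOn (fderiv ℝ u) Ω := hu'.continuousOn_fderiv_of_isOpen hΩ_open le_rfl
  simp only [norm_gradient]
  have hi1 : IntegrableOn (fun x => u x ^ 2) Ω := by
    refine IntegrableOn.of_bound hfin ((hcu.pow 2).aestronglyMeasurable hmΩ) (M ^ 2) ?_
    filter_upwards [ae_restrict_mem hmΩ] with x hx
    rw [norm_pow]
    exact pow_le_pow_left₀ (norm_nonneg _) (hM x hx).1 2
  have hi2 : IntegrableOn (fun x => ‖fderiv ℝ u x‖ ^ 2) Ω := by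
    refine IntegrableOn.of_bound hfin ((hcg.norm.pow 2).aestronglyMeasurable hmΩ) (M ^ 2) ?_
    filter_upwards [ae_restrict_mem hmΩ] with x hx
    rw [norm_pow, norm_norm]
    exact pow_le_pow_left₀ (norm_nonneg _) (hM x hx).2 2
  rw [← integral_add hi1 hi2]
  set S := ∫ x in Ω, (u x ^ 2 + ‖fderiv ℝ u x‖ ^ 2) with hS
  have hS0 : 0 ≤ S := integral_nonneg fun x => by positivity
  have hN : ∫⁻ z in Ω, (‖u z‖ₑ ^ 2 + ‖fderiv ℝ u z‖ₑ ^ 2) = ENNReal.ofReal S := by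
    rw [hS, ofReal_integral_eq_lintegral_ofReal
      (f := fun x => u x ^ 2 + ‖fderiv ℝ u x‖ ^ 2) (Integrable.add hi1 hi2)
      (Filter.Eventually.of_forall fun x => by simp only [Pi.zero_apply]; positivity)]
    refine lintegral_congr fun x => ?_
    rw [ENNReal.ofReal_add (by positivity) (by positivity), ENNReal.ofReal_pow (norm_nonneg _),
      ofReal_norm, ← sq_abs, ENNReal.ofReal_pow (abs_nonneg _), ← Real.norm_eq_abs, ofReal_norm]
  have hH := H k hk u hu'
  rw [hN, ENNReal.ofReal_rpow_of_nonneg hS0 (by positivity),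
    ← ENNReal.ofReal_mul (by positivity)] at hH
  have hL : ∫ x in Ω, |u x| ^ k ≤ D ^ k * Real.Gamma ((k : ℝ) / 2 + 1) * S ^ ((k : ℝ) / 2) := by
    rw [integral_eq_lintegral_of_nonneg_ae (f := fun x => |u x| ^ k) (Filter.Eventually.of_forall fun x => by
      simp only [Pi.zero_apply]; positivity) ((hcu.abs.pow k).aestronglyMeasurable hmΩ)]
    refine ENNReal.toReal_le_of_le_ofReal (by positivity) (le_trans (le_of_eq ?_) hH)
    refine lintegral_congr fun x => ?_
    rw [ENNReal.ofReal_pow (abs_nonneg _), ← Real.norm_eq_abs, ofReal_norm]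
  calc (∫ x in Ω, |u x| ^ k) ^ ((1 : ℝ) / k)
      ≤ (D ^ k * Real.Gamma ((k : ℝ) / 2 + 1) * S ^ ((k : ℝ) / 2)) ^ ((1 : ℝ) / k) :=
        Real.rpow_le_rpow (integral_nonneg fun x => by positivity) hL (by positivity)
    _ = _ := by
        rw [Real.mul_rpow (by positivity) (by positivity),
          Real.mul_rpow (by positivity) (by positivity), ← Real.rpow_natCast D k,
          ← Real.rpow_mul hD.le, ← Real.rpow_mul hS0, Real.sqrt_eq_rpow]
        have e1 : (k : ℝ) * (1 / k) = 1 := by field_simp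
        have e2 : (k : ℝ) / 2 * (1 / k) = 1 / 2 := by field_simp
        rw [e1, e2, Real.rpow_one]
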